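/- Half-message lemma in the converse of Theorem 5: for every integer N ≥ 6, every i ∈ {2,…,N−3}, every PIR scheme with cyclic-graph storage on N servers and privacy sets 𝒫_n = ℐ_n ∪ ℐ_{n+i} (mod N), and every index k ∈ {1,…,N}, letting 𝒲′ := {W_{k−i−1}, W_k, W_{k−1}, W_{k−i+1}, W_{k−i+3}, W_{k+1}} (indices mod N), one has I(W_{k−i−1}, W_{k−i} ; A_{k−i}^{[k]}, A_{k−i+1}^{[k]} | 𝒲′ ∖ {W_{k−i−1}}, 𝒬) ≥ L/2. -/

import Mathlib

/-!
Write `m = k - i`, and let `T` be all message indices except `m`.  Only servers `m` and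
`m + 1` store `W m`, so when `m` is retrieved, `W m` is determined by the two answers of these
servers together with `(W_j)_{j ∈ T}` and the queries.  Since `W m` still has entropy `L` given
these other messages and the queries, subadditivity gives
`L ≤ H(A m m | T, 𝒬) + H(A (m+1) m | T, 𝒬)`
(`le_Hc_add_Hc`; for a general pair of servers).

Both `m` and `k` lie in the privacy sets of servers `m` and `m + 1`, so each summand is unchanged
when `k` is retrieved instead of `m`.  The conditioning set `C` of the statement avoids `m`, so
replacing `T` by `C` only increases each summand, and each is then at most
`H(A m k, A (m+1) k | C, 𝒬)`.  Hence this joint entropy is at least `L / 2`.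
It equals the mutual information in question, because the two answers are functions of
`W (m-1)`, `W m`, `W (m+1)` and the queries, and `m + 1 ∈ C`.

The entropy calculus rests on two facts: `H_le_of_Det` (a function of a variable has no larger
entropy) and `H_submod` (strong subadditivity); everything else is a combination of them.
-/

/-!
Formalization of PIR with arbitrary privacy requirement sets.

A PIR scheme with `N` servers and `K` messages of equal length `L > 0` is modeled
by finitely-valued random variables on a common finite probability space:
messages `W 1, …, W K`, and for each server `n ∈ [1:N]` and desired index
`k ∈ [1:K]`, a query `Q n k` and an answer `A n k`.  Shannon entropy,
conditional entropy and (conditional) mutual information are defined from the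
probability mass function `p`.
-/

open scoped Classical BigOperators

noncomputable section

/-- A PIR scheme: a finite probability space together with the message, query and
answer random variables.  Only the variables indexed by `n ∈ [1:N]`, `k ∈ [1:K]`
are meaningful; all random variables are finitely valued (`ℕ`-valued on a finite
sample space). -/
structure PIRScheme (N K : ℕ) (L : ℝ) where
  /-- the sample space -/
  Ω : Type
  [fin : Fintype Ω]
  /-- the probability mass function -/
  p : Ω → ℝ
  p_nonneg : ∀ ω, 0 ≤ p ω
  p_sum : ∑ ω : Ω, p ω = 1
  /-- the messages `W i`, `i ∈ [1:K]` -/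
  W : ℕ → Ω → ℕ
  /-- `Q n k` is the query sent to server `n` when retrieving message `k` -/
  Q : ℕ → ℕ → Ω → ℕ
  /-- `A n k` is the answer of server `n` when retrieving message `k` -/
  A : ℕ → ℕ → Ω → ℕ

attribute [instance] PIRScheme.fin

namespace PIRScheme

variable {N K : ℕ} {L : ℝ} (S : PIRScheme N K L)

/-- `P[X = v]`. -/
def prob {α : Type*} (X : S.Ω → α) (v : α) : ℝ :=
  ∑ ω : S.Ω, if X ω = v then S.p ω else 0

/-- Shannon entropy `H(X)`. -/
def H {α : Type*} (X : S.Ω → α) : ℝ :=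
  - ∑ ω : S.Ω, S.p ω * Real.log (S.prob X (X ω))

/-- Conditional entropy `H(X | Y) := H(X, Y) - H(Y)`. -/
def Hc {α β : Type*} (X : S.Ω → α) (Y : S.Ω → β) : ℝ :=
  S.H (fun ω => (X ω, Y ω)) - S.H Y

/-- Mutual information `I(X ; Y) := H(X) + H(Y) - H(X, Y)`. -/
def MI {α β : Type*} (X : S.Ω → α) (Y : S.Ω → β) : ℝ :=
  S.H X + S.H Y - S.H (fun ω => (X ω, Y ω))

/-- Conditional mutual information `I(X ; Y | Z) := H(X|Z) + H(Y|Z) - H(X,Y|Z)`. -/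
def MIc {α β γ : Type*} (X : S.Ω → α) (Y : S.Ω → β) (Z : S.Ω → γ) : ℝ :=
  S.Hc X Z + S.Hc Y Z - S.Hc (fun ω => (X ω, Y ω)) Z

/-- The joint random variable `(W j)_{j ∈ T}` of a subcollection of the messages. -/
def jointW (T : Finset ℕ) : S.Ω → (T → ℕ) := fun ω j => S.W j ω

/-- The joint random variable of all `K` messages. -/
def allW : S.Ω → (Finset.Icc 1 K → ℕ) := S.jointW (Finset.Icc 1 K)

/-- `𝒬`: the tuple of all queries `Q n k`, `n ∈ [1:N]`, `k ∈ [1:K]`. -/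
def allQ : S.Ω → ((Finset.Icc 1 N ×ˢ Finset.Icc 1 K : Finset (ℕ × ℕ)) → ℕ) :=
  fun ω x => S.Q x.1.1 x.1.2 ω

/-- The tuple of answers `(A 1 k, …, A N k)` when retrieving message `k`. -/
def ansVec (k : ℕ) : S.Ω → (Finset.Icc 1 N → ℕ) := fun ω n => S.A n k ω

/-- The download cost `D k := ∑_{n=1}^N H(A n k)`. -/
def D (k : ℕ) : ℝ := ∑ n ∈ Finset.Icc 1 N, S.H (S.A n k)

/-- The rate `R := K ⬝ L / ∑_{k=1}^K D k`. -/
def rate : ℝ := (K * L) / ∑ k ∈ Finset.Icc 1 K, S.D k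

/-- Validity of a PIR scheme with respect to storage index sets `I n` and privacy
requirement sets `P n`:
(messages) the messages each have entropy `L` and are mutually independent;
(i) the messages are independent of all the queries;
(ii) each answer is a function of the server's storage and received query;
(iii) privacy: for all `θ1, θ2 ∈ P n` and every subcollection `T` of the messages,
  the answer of server `n` has the same conditional entropy whether `θ1` or `θ2`
  is being retrieved;
(iv) decodability: message `k` is determined by all the answers and the queries. -/
structure IsValid (S : PIRScheme N K L) (I P : ℕ → Finset ℕ) : Prop where
  msg_entropy : ∀ i ∈ Finset.Icc 1 K, S.H (S.W i) = L
  msg_indep : S.H S.allW = ∑ i ∈ Finset.Icc 1 K, S.H (S.W i)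
  stor_sub_priv : ∀ n ∈ Finset.Icc 1 N, I n ⊆ P n
  priv_sub : ∀ n ∈ Finset.Icc 1 N, P n ⊆ Finset.Icc 1 K
  query_indep : S.MI S.allW S.allQ = 0
  ans_det : ∀ n ∈ Finset.Icc 1 N, ∀ k ∈ Finset.Icc 1 K,
    S.Hc (S.A n k) (fun ω => (S.jointW (I n) ω, S.Q n k ω)) = 0
  privacy : ∀ n ∈ Finset.Icc 1 N, ∀ θ1 ∈ P n, ∀ θ2 ∈ P n, ∀ T ⊆ Finset.Icc 1 K,
    S.Hc (S.A n θ1) (fun ω => (S.jointW T ω, S.allQ ω)) =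
      S.Hc (S.A n θ2) (fun ω => (S.jointW T ω, S.allQ ω))
  decodable : ∀ k ∈ Finset.Icc 1 K, S.Hc (S.W k) (fun ω => (S.ansVec k ω, S.allQ ω)) = 0

end PIRScheme

/-- Path-graph storage on `N` servers (`K = N - 1` messages):
`𝒲_1 = {W 1}`, `𝒲_n = {W (n-1), W n}` for `2 ≤ n ≤ N - 1`, `𝒲_N = {W (N-1)}`. -/
def pathIndex (N : ℕ) : ℕ → Finset ℕ := fun n =>
  if n = 1 then {1} else if n = N then {N - 1} else {n - 1, n}

/-- Modified-edge-server privacy sets on the path graph: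
`𝒫_1 = 𝒫_2 = {1, 2}`, `𝒫_N = 𝒫_{N-1} = {N-2, N-1}`, and `𝒫_n = {n-1, n}`
for `2 ≤ n ≤ N - 1`. -/
def pathModEdgePriv (N : ℕ) : ℕ → Finset ℕ := fun n =>
  if n ≤ 2 then {1, 2} else if N - 1 ≤ n then {N - 2, N - 1} else {n - 1, n}

/-- The representative of `m` modulo `N` lying in `{1, …, N}` (so that index `0`
is identified with index `N`). -/
def cyc (N : ℕ) (m : ℤ) : ℕ := (((m - 1) % (N : ℤ)) + 1).toNat

/-- Cyclic-graph storage on `N` servers (`K = N` messages):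
`𝒲_n = {W (n-1), W n}` with indices mod `N`, i.e. `ℐ_n = {n - 1, n} (mod N)`. -/
def cycIndex (N : ℕ) : ℕ → Finset ℕ := fun n => {cyc N ((n : ℤ) - 1), cyc N (n : ℤ)}

/-- The cyclic interval `[a : a + len - 1]` of `len` consecutive indices mod `N`,
as a subset of `{1, …, N}`. -/
def cycInterval (N : ℕ) (a : ℤ) (len : ℕ) : Finset ℕ :=
  (Finset.range len).image fun j => cyc N (a + j)

namespace PIRScheme

variable {N K : ℕ} {L : ℝ} (S : PIRScheme N K L)

/-! ### Functional dependence and entropy -/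

/-- `X` is almost surely a function of `Y`: on the support of `p`, equal values of `Y` force
equal values of `X`. -/
def Det {α β : Type*} (X : S.Ω → α) (Y : S.Ω → β) : Prop :=
  ∀ ω ω', 0 < S.p ω → 0 < S.p ω' → Y ω = Y ω' → X ω = X ω'

/-- The definition of `prob`, for any decidability instance. -/
lemma prob_eq {α : Type*} (X : S.Ω → α) (v : α) [∀ ω, Decidable (X ω = v)] :
    S.prob X v = ∑ ω, if X ω = v then S.p ω else 0 := by
  unfold prob
  congr!

lemma prob_nonneg {α : Type*} (X : S.Ω → α) (v : α) : 0 ≤ S.prob X v := by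
  unfold prob
  refine Finset.sum_nonneg fun ω _ => ?_
  split_ifs
  · exact S.p_nonneg ω
  · exact le_rfl

lemma le_prob {α : Type*} (X : S.Ω → α) (ω : S.Ω) : S.p ω ≤ S.prob X (X ω) := by
  unfold prob
  have h := Finset.single_le_sum (f := fun ω' => if X ω' = X ω then S.p ω' else 0)
    (fun ω' _ => by split_ifs; exacts [S.p_nonneg ω', le_rfl]) (Finset.mem_univ ω)
  simpa using h

lemma prob_le_of_Det {α β : Type*} {X : S.Ω → α} {Y : S.Ω → β} (h : S.Det X Y) {ω : S.Ω}
    (hω : 0 < S.p ω) : S.prob Y (Y ω) ≤ S.prob X (X ω) := by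
  unfold prob
  refine Finset.sum_le_sum fun ω' _ => ?_
  have h0 := S.p_nonneg ω'
  rcases h0.eq_or_lt with h1 | h1
  · simp [← h1]
  · by_cases hY : Y ω' = Y ω
    · rw [if_pos hY, if_pos (h ω' ω h1 hω hY)]
    · rw [if_neg hY]
      split_ifs
      · exact h0
      · exact le_rfl

lemma H_le_of_Det {α β : Type*} {X : S.Ω → α} {Y : S.Ω → β} (h : S.Det X Y) :
    S.H X ≤ S.H Y := by
  unfold H
  refine neg_le_neg (Finset.sum_le_sum fun ω _ => ?_)
  rcases (S.p_nonneg ω).eq_or_lt with h1 | h1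
  · simp [← h1]
  · exact mul_le_mul_of_nonneg_left
      (Real.log_le_log (h1.trans_le (S.le_prob Y ω)) (S.prob_le_of_Det h h1)) h1.le

/-- A variable of zero conditional entropy is almost surely a function of the conditioning
variable. -/
lemma Det_of_Hc_eq_zero {α β : Type*} {X : S.Ω → α} {Y : S.Ω → β} (h : S.Hc X Y = 0) :
    S.Det X Y := by
  have hD : S.Det Y (fun ω => (X ω, Y ω)) := fun ω ω' _ _ he => (Prod.ext_iff.1 he).2
  -- `Hc X Y` is a sum of nonnegative terms `p ω * log (P[Y] / P[X, Y])`, so all of them vanish.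
  have hs : ∑ ω : S.Ω, (S.p ω * Real.log (S.prob Y (Y ω))
      - S.p ω * Real.log (S.prob (fun ω => (X ω, Y ω)) (X ω, Y ω))) = 0 := by
    rw [Finset.sum_sub_distrib]
    unfold Hc H at h
    linarith
  have hnn : ∀ ω ∈ Finset.univ, 0 ≤ S.p ω * Real.log (S.prob Y (Y ω))
      - S.p ω * Real.log (S.prob (fun ω => (X ω, Y ω)) (X ω, Y ω)) := by
    intro ω _
    rcases (S.p_nonneg ω).eq_or_lt with h1 | h1
    · simp [← h1]
    · exact sub_nonneg.2 (mul_le_mul_of_nonneg_left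
        (Real.log_le_log (h1.trans_le (S.le_prob (fun ω => (X ω, Y ω)) ω))
          (S.prob_le_of_Det hD h1)) h1.le)
  have hz := (Finset.sum_eq_zero_iff_of_nonneg hnn).1 hs
  intro ω ω' hω hω' hY
  by_contra hX
  have h1 := hz ω (Finset.mem_univ ω)
  have h2 : Real.log (S.prob Y (Y ω))
      = Real.log (S.prob (fun ω => (X ω, Y ω)) (X ω, Y ω)) :=
    mul_left_cancel₀ hω.ne' (sub_eq_zero.1 h1)
  -- `ω'` contributes to `P[Y = Y ω]` but not to `P[(X, Y) = (X ω, Y ω)]`.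
  have hlt : S.prob (fun ω => (X ω, Y ω)) (X ω, Y ω) < S.prob Y (Y ω) := by
    unfold prob
    refine Finset.sum_lt_sum (fun x _ => ?_) ⟨ω', Finset.mem_univ _, ?_⟩
    · have := S.p_nonneg x
      by_cases hx : Y x = Y ω
      · by_cases hx' : X x = X ω <;> simp [hx, hx', this]
      · simp [hx]
    · simp [hY.symm, Ne.symm hX, hω']
  exact (Real.log_lt_log (hω.trans_le (S.le_prob (fun ω => (X ω, Y ω)) ω)) hlt).ne' h2

lemma H_const {α : Type*} (c : α) : S.H (fun _ => c) = 0 := by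
  simp [H, prob, S.p_sum]

/-- The total-mass bound `∑ P(x,z) P(y,z) / P(z) ≤ 1` behind strong subadditivity, with the sum
over values written as a `p`-average over the sample space. -/
lemma sum_ratio_le_one {α β γ : Type*} (X : S.Ω → α) (Y : S.Ω → β) (Z : S.Ω → γ) :
    ∑ ω, S.p ω * (S.prob (fun ω => (X ω, Z ω)) (X ω, Z ω)
      * S.prob (fun ω => (Y ω, Z ω)) (Y ω, Z ω)
      / (S.prob (fun ω => (X ω, Y ω, Z ω)) (X ω, Y ω, Z ω) * S.prob Z (Z ω))) ≤ 1 := by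
  -- Expanding both numerators over sample points `a`, `b` leaves, for each pair, the mass of one
  -- atom of `(X, Y, Z)` divided by itself.
  have hexp : ∀ ω, S.p ω * (S.prob (fun ω => (X ω, Z ω)) (X ω, Z ω)
      * S.prob (fun ω => (Y ω, Z ω)) (Y ω, Z ω)
      / (S.prob (fun ω => (X ω, Y ω, Z ω)) (X ω, Y ω, Z ω) * S.prob Z (Z ω)))
      = ∑ a, ∑ b, (if Z b = Z a then S.p a * S.p b / S.prob Z (Z a) else 0)
        * ((if (X ω, Y ω, Z ω) = (X a, Y b, Z a) then S.p ω else 0)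
          / S.prob (fun ω => (X ω, Y ω, Z ω)) (X a, Y b, Z a)) := by
    intro ω
    conv_lhs =>
      rw [show S.prob (fun ω => (X ω, Z ω)) (X ω, Z ω)
        = ∑ a, if (X a, Z a) = (X ω, Z ω) then S.p a else 0 from S.prob_eq _ _,
        show S.prob (fun ω => (Y ω, Z ω)) (Y ω, Z ω)
        = ∑ b, if (Y b, Z b) = (Y ω, Z ω) then S.p b else 0 from S.prob_eq _ _,
        Finset.sum_mul_sum, Finset.sum_div, Finset.mul_sum]
    refine Finset.sum_congr rfl fun a _ => ?_
    rw [Finset.sum_div, Finset.mul_sum]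
    refine Finset.sum_congr rfl fun b _ => ?_
    by_cases h : X a = X ω ∧ Y b = Y ω ∧ Z a = Z ω ∧ Z b = Z ω
    · obtain ⟨h1, h2, h3, h4⟩ := h
      simp only [h1, h2, h3, h4, if_true]
      simp only [div_eq_mul_inv, mul_inv]
      ring
    · have hL : (if (X a, Z a) = (X ω, Z ω) then S.p a else 0)
          * (if (Y b, Z b) = (Y ω, Z ω) then S.p b else 0) = 0 := by
        by_contra hne
        have h1 := (ite_ne_right_iff.1 (left_ne_zero_of_mul hne)).1
        have h2 := (ite_ne_right_iff.1 (right_ne_zero_of_mul hne)).1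
        simp only [Prod.mk.injEq] at h1 h2
        exact h ⟨h1.1, h2.1, h1.2, h2.2⟩
      rw [hL, zero_div, mul_zero, eq_comm]
      by_cases hZ : Z b = Z a
      · rw [if_neg (c := (X ω, Y ω, Z ω) = (X a, Y b, Z a)), zero_div, mul_zero]
        intro he
        simp only [Prod.mk.injEq] at he
        exact h ⟨he.1.symm, he.2.1.symm, he.2.2.symm, hZ.trans he.2.2.symm⟩
      · rw [if_neg hZ, zero_mul]
  calc _ = ∑ ω, ∑ a, ∑ b, (if Z b = Z a then S.p a * S.p b / S.prob Z (Z a) else 0)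
        * ((if (X ω, Y ω, Z ω) = (X a, Y b, Z a) then S.p ω else 0)
          / S.prob (fun ω => (X ω, Y ω, Z ω)) (X a, Y b, Z a)) :=
        Finset.sum_congr rfl fun ω _ => hexp ω
    _ = ∑ a, ∑ b, (if Z b = Z a then S.p a * S.p b / S.prob Z (Z a) else 0)
        * (S.prob (fun ω => (X ω, Y ω, Z ω)) (X a, Y b, Z a)
          / S.prob (fun ω => (X ω, Y ω, Z ω)) (X a, Y b, Z a)) := by
        rw [Finset.sum_comm]
        refine Finset.sum_congr rfl fun a _ => ?_
        rw [Finset.sum_comm]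
        refine Finset.sum_congr rfl fun b _ => ?_
        rw [← Finset.mul_sum, ← Finset.sum_div,
          S.prob_eq (fun ω => (X ω, Y ω, Z ω)) (X a, Y b, Z a)]
    _ ≤ ∑ a, ∑ b, (if Z b = Z a then S.p a * S.p b / S.prob Z (Z a) else 0) := by
        refine Finset.sum_le_sum fun a _ => Finset.sum_le_sum fun b _ => ?_
        refine mul_le_of_le_one_right ?_ (div_self_le_one _)
        split_ifs
        · exact div_nonneg (mul_nonneg (S.p_nonneg a) (S.p_nonneg b)) (S.prob_nonneg _ _)
        · exact le_rfl
    _ = ∑ a, S.p a * (S.prob Z (Z a) / S.prob Z (Z a)) := by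
        refine Finset.sum_congr rfl fun a _ => ?_
        rw [show S.prob Z (Z a) / S.prob Z (Z a)
          = (∑ b, if Z b = Z a then S.p b else 0) / S.prob Z (Z a) from rfl,
          Finset.sum_div, Finset.mul_sum]
        refine Finset.sum_congr rfl fun b _ => ?_
        split_ifs
        · ring
        · simp
    _ ≤ ∑ a, S.p a := Finset.sum_le_sum fun a _ =>
        mul_le_of_le_one_right (S.p_nonneg a) (div_self_le_one _)
    _ = 1 := S.p_sum

/-- Strong subadditivity (submodularity) of entropy, i.e. `I(X ; Y | Z) ≥ 0`. -/
lemma H_submod {α β γ : Type*} (X : S.Ω → α) (Y : S.Ω → β) (Z : S.Ω → γ) :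
    S.H (fun ω => (X ω, Y ω, Z ω)) + S.H Z
      ≤ S.H (fun ω => (X ω, Z ω)) + S.H (fun ω => (Y ω, Z ω)) := by
  have key := S.sum_ratio_le_one X Y Z
  -- Gibbs: `log r ≤ r - 1`, averaged over `p`.
  have hlog : ∀ ω, S.p ω * Real.log (S.prob (fun ω => (X ω, Z ω)) (X ω, Z ω))
      + S.p ω * Real.log (S.prob (fun ω => (Y ω, Z ω)) (Y ω, Z ω))
      - S.p ω * Real.log (S.prob (fun ω => (X ω, Y ω, Z ω)) (X ω, Y ω, Z ω))
      - S.p ω * Real.log (S.prob Z (Z ω))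
      ≤ S.p ω * (S.prob (fun ω => (X ω, Z ω)) (X ω, Z ω)
      * S.prob (fun ω => (Y ω, Z ω)) (Y ω, Z ω)
      / (S.prob (fun ω => (X ω, Y ω, Z ω)) (X ω, Y ω, Z ω) * S.prob Z (Z ω))) - S.p ω := by
    intro ω
    rcases (S.p_nonneg ω).eq_or_lt with h | h
    · simp [← h]
    · have h1 := h.trans_le (S.le_prob (fun ω => (X ω, Z ω)) ω)
      have h2 := h.trans_le (S.le_prob (fun ω => (Y ω, Z ω)) ω)
      have h3 := h.trans_le (S.le_prob (fun ω => (X ω, Y ω, Z ω)) ω)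
      have h4 := h.trans_le (S.le_prob Z ω)
      have hl := Real.log_le_sub_one_of_pos (div_pos (mul_pos h1 h2) (mul_pos h3 h4))
      rw [Real.log_div (mul_pos h1 h2).ne' (mul_pos h3 h4).ne', Real.log_mul h1.ne' h2.ne',
        Real.log_mul h3.ne' h4.ne'] at hl
      have := mul_le_mul_of_nonneg_left hl h.le
      linarith
  have hsum := Finset.sum_le_sum fun ω (_ : ω ∈ Finset.univ) => hlog ω
  simp only [Finset.sum_sub_distrib, Finset.sum_add_distrib, S.p_sum] at hsum
  unfold H
  linarith

lemma H_pair_le {α β : Type*} (X : S.Ω → α) (Y : S.Ω → β) :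
    S.H (fun ω => (X ω, Y ω)) ≤ S.H X + S.H Y := by
  have h := S.H_submod X Y (fun _ => ())
  have h1 : S.H (fun ω => (X ω, Y ω)) ≤ S.H (fun ω => (X ω, Y ω, ())) :=
    S.H_le_of_Det fun ω ω' _ _ he => by simpa using he
  have h2 : S.H (fun ω => (X ω, ())) ≤ S.H X :=
    S.H_le_of_Det fun ω ω' _ _ he => by simpa using he
  have h3 : S.H (fun ω => (Y ω, ())) ≤ S.H Y :=
    S.H_le_of_Det fun ω ω' _ _ he => by simpa using he
  rw [S.H_const] at h
  linarith

lemma Hc_le_Hc_of_Det_left {α β γ : Type*} {X : S.Ω → α} {Y : S.Ω → β} (Z : S.Ω → γ)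
    (h : S.Det X Y) : S.Hc X Z ≤ S.Hc Y Z := by
  unfold Hc
  refine sub_le_sub_right (S.H_le_of_Det fun ω ω' hω hω' he => ?_) _
  simp only [Prod.mk.injEq] at he ⊢
  exact ⟨h ω ω' hω hω' he.1, he.2⟩

/-- Conditioning on more reduces entropy. -/
lemma Hc_le_Hc_of_Det_right {α β γ : Type*} (X : S.Ω → α) {Y : S.Ω → β} {Z : S.Ω → γ}
    (h : S.Det Z Y) : S.Hc X Y ≤ S.Hc X Z := by
  have h1 := S.H_submod X Y Z
  have h2 : S.H (fun ω => (X ω, Y ω)) ≤ S.H (fun ω => (X ω, Y ω, Z ω)) :=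
    S.H_le_of_Det fun ω ω' _ _ he => by simp only [Prod.mk.injEq] at he ⊢; exact ⟨he.1, he.2.1⟩
  have h3 : S.H (fun ω => (Y ω, Z ω)) ≤ S.H Y := S.H_le_of_Det fun ω ω' hω hω' he => by
    simp only [Prod.mk.injEq]; exact ⟨he, h ω ω' hω hω' he⟩
  unfold Hc
  linarith

/-- `H(X, Y | Z) ≤ H(X | Z) + H(Y | Z)`. -/
lemma Hc_pair_le {α β γ : Type*} (X : S.Ω → α) (Y : S.Ω → β) (Z : S.Ω → γ) :
    S.Hc (fun ω => (X ω, Y ω)) Z ≤ S.Hc X Z + S.Hc Y Z := by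
  have h1 := S.H_submod X Y Z
  have h2 : S.H (fun ω => ((X ω, Y ω), Z ω)) ≤ S.H (fun ω => (X ω, Y ω, Z ω)) :=
    S.H_le_of_Det fun ω ω' _ _ he => by simpa [and_assoc] using he
  unfold Hc
  linarith

/-- If `Y` is determined by `X` and `Z`, then `I(X ; Y | Z) ≥ H(Y | Z)`. -/
lemma Hc_le_MIc {α β γ : Type*} {X : S.Ω → α} {Y : S.Ω → β} {Z : S.Ω → γ}
    (h : S.Det Y (fun ω => (X ω, Z ω))) : S.Hc Y Z ≤ S.MIc X Y Z := by
  have h1 : S.H (fun ω => ((X ω, Y ω), Z ω)) ≤ S.H (fun ω => (X ω, Z ω)) :=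
    S.H_le_of_Det fun ω ω' hω hω' he => by
      have hY := h ω ω' hω hω' he
      simp only [Prod.mk.injEq] at he ⊢
      exact ⟨⟨he.1, hY⟩, he.2⟩
  unfold MIc Hc
  linarith

/-! ### Messages and answers of a valid scheme -/

lemma jointW_eq_iff {T : Finset ℕ} {ω ω' : S.Ω} :
    S.jointW T ω = S.jointW T ω' ↔ ∀ j ∈ T, S.W j ω = S.W j ω' := by
  simp [jointW, funext_iff]

lemma H_jointW_le {β : Type*} (Y : S.Ω → β) (T : Finset ℕ) :
    S.H (fun ω => (S.jointW T ω, Y ω)) ≤ ∑ j ∈ T, S.H (S.W j) + S.H Y := by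
  induction T using Finset.induction_on with
  | empty =>
    rw [Finset.sum_empty, zero_add]
    refine S.H_le_of_Det fun ω ω' _ _ he => ?_
    rw [Prod.mk.injEq, jointW_eq_iff]
    exact ⟨by simp, he⟩
  | insert a T ha ih =>
    rw [Finset.sum_insert ha]
    have h1 : S.H (fun ω => (S.jointW (insert a T) ω, Y ω))
        ≤ S.H (fun ω => (S.W a ω, (S.jointW T ω, Y ω))) := by
      refine S.H_le_of_Det fun ω ω' _ _ he => ?_
      simp only [Prod.mk.injEq, jointW_eq_iff, Finset.forall_mem_insert] at he ⊢
      exact ⟨⟨he.1, he.2.1⟩, he.2.2⟩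
    have h2 := S.H_pair_le (S.W a) (fun ω => (S.jointW T ω, Y ω))
    linarith

variable {S}

/-- An answer agrees at two sample points (of positive mass) as soon as the queries and the
messages stored at the server do. -/
lemma IsValid.ans_eq {I P : ℕ → Finset ℕ} (hS : S.IsValid I P) {n k : ℕ}
    (hn : n ∈ Finset.Icc 1 N) (hk : k ∈ Finset.Icc 1 K) {ω ω' : S.Ω} (hω : 0 < S.p ω)
    (hω' : 0 < S.p ω') (hW : ∀ j ∈ I n, S.W j ω = S.W j ω') (hQ : S.allQ ω = S.allQ ω') :
    S.A n k ω = S.A n k ω' := by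
  refine S.Det_of_Hc_eq_zero (hS.ans_det n hn k hk) ω ω' hω hω' ?_
  rw [Prod.mk.injEq, jointW_eq_iff]
  exact ⟨hW, congrFun hQ ⟨(n, k), Finset.mem_product.2 ⟨hn, hk⟩⟩⟩

/-- Message `m` keeps entropy at least `L` given all the other messages and the queries. -/
lemma IsValid.le_H_allW {I P : ℕ → Finset ℕ} (hS : S.IsValid I P) {m : ℕ}
    (hm : m ∈ Finset.Icc 1 K) :
    L ≤ S.H (fun ω => (S.allW ω, S.allQ ω))
      - S.H (fun ω => (S.jointW ((Finset.Icc 1 K).erase m) ω, S.allQ ω)) := by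
  have h1 := hS.query_indep
  have h2 := S.H_jointW_le S.allQ ((Finset.Icc 1 K).erase m)
  have h3 := Finset.add_sum_erase (Finset.Icc 1 K) (fun i => S.H (S.W i)) hm
  have h4 := hS.msg_entropy m hm
  have h5 := hS.msg_indep
  unfold MI at h1
  unfold allW at *
  linarith

/-- If `m` is stored on no servers besides `n₁` and `n₂`, then the answers of these two servers
for retrieving `m` have total conditional entropy at least `L` given all the other messages and
the queries. -/
lemma IsValid.le_Hc_add_Hc {I P : ℕ → Finset ℕ} (hS : S.IsValid I P) {m n₁ n₂ : ℕ}
    (hm : m ∈ Finset.Icc 1 K)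
    (hI : ∀ n ∈ Finset.Icc 1 N, n ≠ n₁ → n ≠ n₂ → m ∉ I n) :
    L ≤ S.Hc (S.A n₁ m) (fun ω => (S.jointW ((Finset.Icc 1 K).erase m) ω, S.allQ ω))
      + S.Hc (S.A n₂ m) (fun ω => (S.jointW ((Finset.Icc 1 K).erase m) ω, S.allQ ω)) := by
  refine le_trans ?_ (S.Hc_pair_le _ _ _)
  refine (hS.le_H_allW hm).trans (sub_le_sub_right (S.H_le_of_Det fun ω ω' hω hω' he => ?_) _)
  simp only [Prod.mk.injEq, jointW_eq_iff] at he
  obtain ⟨⟨h1, h2⟩, hT, hQ⟩ := he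
  have hans : S.ansVec m ω = S.ansVec m ω' := by
    funext ⟨n, hn⟩
    change S.A n m ω = S.A n m ω'
    by_cases hn1 : n = n₁
    · rw [hn1, h1]
    by_cases hn2 : n = n₂
    · rw [hn2, h2]
    refine hS.ans_eq hn hm hω hω' (fun j hj => hT j (Finset.mem_erase.2 ⟨?_, ?_⟩)) hQ
    · rintro rfl
      exact hI n hn hn1 hn2 hj
    · exact hS.priv_sub n hn (hS.stor_sub_priv n hn hj)
  have hWm : S.W m ω = S.W m ω' :=
    S.Det_of_Hc_eq_zero (hS.decodable m hm) ω ω' hω hω' (Prod.ext hans hQ)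
  refine Prod.ext ((S.jointW_eq_iff).2 fun j hj => ?_) hQ
  by_cases hjm : j = m
  · rw [hjm, hWm]
  · exact hT j (Finset.mem_erase.2 ⟨hjm, hj⟩)

end PIRScheme

/-! ### Cyclic indices -/

lemma cyc_mem {N : ℕ} (hN : 0 < N) (z : ℤ) : cyc N z ∈ Finset.Icc 1 N := by
  have h1 := Int.emod_nonneg (z - 1) (b := (N : ℤ)) (by omega)
  have h2 := Int.emod_lt_of_pos (z - 1) (b := (N : ℤ)) (by omega)
  rw [Finset.mem_Icc, cyc]
  omega

lemma cyc_modEq {N : ℕ} (hN : 0 < N) (z : ℤ) : (cyc N z : ℤ) ≡ z [ZMOD N] := by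
  have h1 := Int.emod_nonneg (z - 1) (b := (N : ℤ)) (by omega)
  have h2 : (cyc N z : ℤ) = (z - 1) % N + 1 := by
    rw [cyc]; omega
  rw [h2]
  simpa using (Int.mod_modEq (z - 1) N).add_right 1

lemma cyc_eq_iff {N : ℕ} (hN : 0 < N) {a b : ℤ} : cyc N a = cyc N b ↔ a ≡ b [ZMOD N] := by
  constructor
  · intro h
    have := cyc_modEq hN a
    rw [h] at this
    exact this.symm.trans (cyc_modEq hN b)
  · intro h
    rw [cyc, cyc]
    have : (a - 1) % N = (b - 1) % N := h.sub_right 1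
    rw [this]

lemma cyc_of_mem {N n : ℕ} (hn : n ∈ Finset.Icc 1 N) : cyc N (n : ℤ) = n := by
  rw [Finset.mem_Icc] at hn
  rw [cyc, Int.emod_eq_of_lt (by omega) (by omega)]
  omega

lemma cyc_cyc_add {N : ℕ} (hN : 0 < N) (a d : ℤ) : cyc N ((cyc N a : ℤ) + d) = cyc N (a + d) :=
  (cyc_eq_iff hN).2 ((cyc_modEq hN a).add_right d)

lemma cyc_ne {N : ℕ} (hN : 0 < N) {a b : ℤ} (h1 : 0 < a - b) (h2 : a - b < N) :
    cyc N a ≠ cyc N b := by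
  intro h
  have := Int.le_of_dvd h1 ((cyc_eq_iff hN).1 h).symm.dvd
  omega

lemma mem_cycInterval_two {N : ℕ} (a : ℤ) (x : ℕ) :
    x ∈ cycInterval N a 2 ↔ x = cyc N a ∨ x = cyc N (a + 1) := by
  simp [cycInterval, Finset.range_add_one, or_comm]

/-- **Half-message lemma** in the converse of Theorem 5: for every `N ≥ 6`, every
`i ∈ {2, …, N-3}`, every PIR scheme with cyclic-graph storage on `N` servers and
privacy sets `𝒫_n = ℐ_n ∪ ℐ_{n+i} (mod N)`, and every index `k ∈ [1:N]`, letting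
`𝒲′ := {W (k-i-1), W k, W (k-1), W (k-i+1), W (k-i+3), W (k+1)}` (indices mod `N`),
one has
`I(W (k-i-1), W (k-i) ; A (k-i) k, A (k-i+1) k | 𝒲′ \ {W (k-i-1)}, 𝒬) ≥ L/2`. -/
theorem cyclic_ithNeighbor_half_message_lemma (N i : ℕ) (hN : 6 ≤ N)
    (hi1 : 2 ≤ i) (hi2 : i + 3 ≤ N) (L : ℝ) (hL : 0 < L)
    (S : PIRScheme N N L)
    (hS : S.IsValid (cycIndex N)
      (fun n => cycInterval N ((n : ℤ) - 1) 2 ∪ cycInterval N ((n : ℤ) + (i : ℤ) - 1) 2))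
    (k : ℕ) (hk : k ∈ Finset.Icc 1 N) :
    L / 2 ≤
      S.MIc
        (fun ω => (S.W (cyc N ((k : ℤ) - i - 1)) ω, S.W (cyc N ((k : ℤ) - i)) ω))
        (fun ω => (S.A (cyc N ((k : ℤ) - i)) k ω, S.A (cyc N ((k : ℤ) - i + 1)) k ω))
        (fun ω =>
          (S.jointW ({cyc N (k : ℤ), cyc N ((k : ℤ) - 1), cyc N ((k : ℤ) - i + 1),
              cyc N ((k : ℤ) - i + 3), cyc N ((k : ℤ) + 1)} : Finset ℕ) ω,
            S.allQ ω)) := by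
  have hN0 : 0 < N := by omega
  set m := cyc N ((k : ℤ) - i) with hm
  set m' := cyc N ((k : ℤ) - i + 1) with hm'
  have hmI : m ∈ Finset.Icc 1 N := cyc_mem hN0 _
  have hm'I : m' ∈ Finset.Icc 1 N := cyc_mem hN0 _
  have hck : cyc N (k : ℤ) = k := cyc_of_mem hk
  -- The storage of the servers `m` and `m'`.
  have hIm : ∀ j ∈ cycIndex N m, j = cyc N ((k : ℤ) - i - 1) ∨ j = m := by
    intro j hj
    have := cyc_cyc_add hN0 ((k : ℤ) - i) (-1)
    simp only [← sub_eq_add_neg, ← hm] at this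
    simpa [cycIndex, this, cyc_of_mem hmI] using hj
  have hIm' : ∀ j ∈ cycIndex N m', j = m ∨ j = m' := by
    intro j hj
    have := cyc_cyc_add hN0 ((k : ℤ) - i + 1) (-1)
    simp only [← hm', ← sub_eq_add_neg] at this
    simpa [cycIndex, this, cyc_of_mem hm'I] using hj
  -- Both servers hide whether `m` or `k` is retrieved.
  have hPm : m ∈ cycInterval N ((m : ℤ) - 1) 2 ∪ cycInterval N ((m : ℤ) + (i : ℤ) - 1) 2 := by
    rw [Finset.mem_union, mem_cycInterval_two, sub_add_cancel, cyc_of_mem hmI]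
    exact Or.inl (Or.inr rfl)
  have hPk : k ∈ cycInterval N ((m : ℤ) - 1) 2 ∪ cycInterval N ((m : ℤ) + (i : ℤ) - 1) 2 := by
    have : cyc N ((m : ℤ) + i - 1 + 1) = k := by
      rw [sub_add_cancel, hm, cyc_cyc_add hN0, sub_add_cancel, hck]
    rw [Finset.mem_union, mem_cycInterval_two, mem_cycInterval_two, this]
    exact Or.inr (Or.inr rfl)
  have hPm' : m ∈ cycInterval N ((m' : ℤ) - 1) 2
      ∪ cycInterval N ((m' : ℤ) + (i : ℤ) - 1) 2 := by
    rw [Finset.mem_union, mem_cycInterval_two, sub_eq_add_neg, hm', cyc_cyc_add hN0,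
      add_neg_cancel_right]
    exact Or.inl (Or.inl rfl)
  have hPk' : k ∈ cycInterval N ((m' : ℤ) - 1) 2
      ∪ cycInterval N ((m' : ℤ) + (i : ℤ) - 1) 2 := by
    have : cyc N ((m' : ℤ) + i - 1) = k := by
      rw [add_sub_assoc, hm', cyc_cyc_add hN0, ← hck]
      congr 1
      rw [hck]
      ring
    rw [Finset.mem_union, mem_cycInterval_two, mem_cycInterval_two, this]
    exact Or.inr (Or.inl rfl)
  set C : Finset ℕ := {cyc N (k : ℤ), cyc N ((k : ℤ) - 1), m',
    cyc N ((k : ℤ) - i + 3), cyc N ((k : ℤ) + 1)} with hC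
  set T := (Finset.Icc 1 N).erase m with hT
  -- The indices in `C` exceed `m = k - i` by `i`, `i - 1`, `1`, `3`, `i + 1`, all in `(0, N)`.
  have hCT : C ⊆ T := by
    intro j hj
    rw [hC] at hj
    simp only [Finset.mem_insert, Finset.mem_singleton] at hj
    rw [hT, Finset.mem_erase]
    rcases hj with rfl | rfl | rfl | rfl | rfl <;>
      exact ⟨cyc_ne hN0 (by omega) (by omega), cyc_mem hN0 _⟩
  have hsub : T ⊆ Finset.Icc 1 N := Finset.erase_subset _ _
  have hL2 := hS.le_Hc_add_Hc (n₁ := m) (n₂ := m') hmI (by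
    intro n hn h1 h2 hmem
    simp only [cycIndex, Finset.mem_insert, Finset.mem_singleton] at hmem
    rcases hmem with h | h
    · apply h2
      rw [hm, cyc_eq_iff hN0] at h
      have h3 := (cyc_eq_iff hN0).2 (h.add_right 1)
      rw [sub_add_cancel, cyc_of_mem hn] at h3
      exact h3.symm
    · exact h1 (h.trans (cyc_of_mem hn)).symm)
  have hp := hS.privacy m hmI m hPm k hPk T hsub
  have hp' := hS.privacy m' hm'I m hPm' k hPk' T hsub
  have hDet : S.Det (fun ω => (S.jointW C ω, S.allQ ω))
      (fun ω => (S.jointW T ω, S.allQ ω)) := by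
    intro ω ω' _ _ he
    simp only [Prod.mk.injEq, PIRScheme.jointW_eq_iff] at he ⊢
    exact ⟨fun j hj => he.1 j (hCT hj), he.2⟩
  have hA := (S.Hc_le_Hc_of_Det_right (S.A m k) hDet).trans
    (S.Hc_le_Hc_of_Det_left (Y := fun ω => (S.A m k ω, S.A m' k ω)) _
      fun ω ω' _ _ he => (Prod.ext_iff.1 he).1)
  have hB := (S.Hc_le_Hc_of_Det_right (S.A m' k) hDet).trans
    (S.Hc_le_Hc_of_Det_left (Y := fun ω => (S.A m k ω, S.A m' k ω)) _
      fun ω ω' _ _ he => (Prod.ext_iff.1 he).2)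
  refine le_trans (by linarith) (S.Hc_le_MIc fun ω ω' hω hω' he => ?_)
  simp only [Prod.mk.injEq, PIRScheme.jointW_eq_iff] at he ⊢
  obtain ⟨⟨ha, hb⟩, hc, hQ⟩ := he
  have hm'C : m' ∈ C := by simp [hC]
  constructor
  · refine hS.ans_eq hmI hk hω hω' (fun j hj => ?_) hQ
    rcases hIm j hj with rfl | rfl
    exacts [ha, hb]
  · refine hS.ans_eq hm'I hk hω hω' (fun j hj => ?_) hQ
    rcases hIm' j hj with rfl | rfl
    exacts [hb, hc _ hm'C]
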